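/- arXiv:math/9905124 — 2 statements merged into one kernel-verified Lean document; each statement's English description precedes it below -/
import Mathlib

section
/- Let p̂, q̂ be sequences in (0,1/2] and F a nonprincipal filter on ω which is nonmeasurable with respect to both μ_p̂ and μ_q̂. Define r_n = min(p_n, q_n). Then F is μ_r̂-nonmeasurable. -/
open MeasureTheory Filter Set
open scoped ENNReal

/-- `μ` is the product (Bernoulli) measure on `Bool^ι` determined by the sequence `p`:
a probability measure giving each cylinder set its natural product value. -/
def IsBernoulli {ι : Type*} (μ : Measure (ι → Bool)) (p : ι → ℝ≥0∞) : Prop :=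
  IsProbabilityMeasure μ ∧
    ∀ (s : Finset ι) (f : ι → Bool),
      μ {x | ∀ i ∈ s, x i = f i} = ∏ i ∈ s, (if f i then p i else 1 - p i)

/-- The subset of `2^ω` corresponding to a filter on `ω`, via characteristic functions. -/
def filterSet (F : Filter ℕ) : Set (ℕ → Bool) := {x | {n | x n = true} ∈ F}

theorem measurableSet_forall_true {ι : Type*} (s : Finset ι) :
    MeasurableSet {x : ι → Bool | ∀ i ∈ s, x i = true} := by
  simp only [ofPred_forall]
  exact s.measurableSet_biInter fun i _ =>
    measurableSet_eq_fun (measurable_pi_apply i) measurable_const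

/-- Finite measures on `Bool^ι` are determined by the cylinders prescribing the value `true` on a
finite set of coordinates. -/
theorem measure_ext_of_forall_true {ι : Type*} {μ ν : Measure (ι → Bool)} [IsFiniteMeasure μ]
    (h : ∀ s : Finset ι, μ {x | ∀ i ∈ s, x i = true} = ν {x | ∀ i ∈ s, x i = true}) :
    μ = ν := by
  classical
  refine ext_of_generate_finite (range fun s : Finset ι => {x : ι → Bool | ∀ i ∈ s, x i = true})
    ?_ ?_ ?_ (by simpa using h ∅)
  · apply le_antisymm
    · refine iSup_le fun i => Measurable.comap_le ?_
      refine measurable_to_bool ?_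
      refine MeasurableSpace.measurableSet_generateFrom ⟨{i}, ?_⟩
      ext x
      simp
    · refine MeasurableSpace.generateFrom_le ?_
      rintro _ ⟨s, rfl⟩
      exact measurableSet_forall_true s
  · rintro _ ⟨s, rfl⟩ _ ⟨t, rfl⟩ _
    refine ⟨s ∪ t, ?_⟩
    ext x
    simp only [Finset.mem_union, mem_ofPred_eq, mem_inter_iff]
    grind
  · rintro _ ⟨s, rfl⟩
    exact h s

theorem IsBernoulli.apply_forall_true {ι : Type*} {μ : Measure (ι → Bool)} {p : ι → ℝ≥0∞}
    (hμ : IsBernoulli μ p) (s : Finset ι) :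
    μ {x | ∀ i ∈ s, x i = true} = ∏ i ∈ s, p i := by
  simpa using hμ.2 s fun _ => true

theorem exists_isProbabilityMeasure_forall_true {ι : Type*} (p : ι → ℝ≥0∞) (hp : ∀ i, p i ≤ 1) :
    ∃ μ : Measure (ι → Bool), IsProbabilityMeasure μ ∧
      ∀ s : Finset ι, μ {x | ∀ i ∈ s, x i = true} = ∏ i ∈ s, p i := by
  let m : ι → Measure Bool := fun i =>
    p i • Measure.dirac true + (1 - p i) • Measure.dirac false
  have hm : ∀ i, IsProbabilityMeasure (m i) := fun i =>
    ⟨by simp [m, add_tsub_cancel_of_le (hp i)]⟩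
  refine ⟨Measure.infinitePi m, inferInstance, fun s => ?_⟩
  have := Measure.infinitePi_pi m (s := s) (t := fun _ => {true}) (fun _ _ => by measurability)
  simpa [Set.pi, m] using this

/-- Choosing the coordinates in `A` from one sequence and the others from another. -/
theorem measurePreserving_piecewise {ι : Type*} {μ ν ρ : Measure (ι → Bool)}
    {p q r : ι → ℝ≥0∞} (hμ : IsBernoulli μ p) (hν : IsBernoulli ν q) (hρ : IsBernoulli ρ r)
    (A : Set ι) [DecidablePred (· ∈ A)] (hr : ∀ i, r i = if i ∈ A then p i else q i) :
    MeasurePreserving (fun z : (ι → Bool) × (ι → Bool) => A.piecewise z.1 z.2)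
      (μ.prod ν) ρ := by
  have := hμ.1
  have := hν.1
  have hmeas : Measurable fun z : (ι → Bool) × (ι → Bool) => A.piecewise z.1 z.2 := by
    refine measurable_pi_lambda _ fun i => ?_
    by_cases hi : i ∈ A <;> simp only [Set.piecewise, hi, if_true, if_false] <;> fun_prop
  refine ⟨hmeas, ?_⟩
  have := Measure.isProbabilityMeasure_map (μ := μ.prod ν) hmeas.aemeasurable
  refine measure_ext_of_forall_true fun s => ?_
  rw [Measure.map_apply hmeas (measurableSet_forall_true s), hρ.apply_forall_true]
  have : (fun z : (ι → Bool) × (ι → Bool) => A.piecewise z.1 z.2) ⁻¹'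
      {x | ∀ i ∈ s, x i = true} =
      {x | ∀ i ∈ s.filter (· ∈ A), x i = true} ×ˢ
        {x | ∀ i ∈ s.filter (· ∉ A), x i = true} := by
    ext z
    simp only [mem_preimage, mem_ofPred_eq, mem_prod, Finset.mem_filter, Set.piecewise]
    grind
  rw [this, Measure.prod_prod, hμ.apply_forall_true, hν.apply_forall_true]
  simp only [hr, Finset.prod_ite]

/-- Coordinatewise conjunction multiplies the success probabilities. -/
theorem measurePreserving_and {ι : Type*} {μ ν ρ : Measure (ι → Bool)} [IsFiniteMeasure μ]
    [IsFiniteMeasure ν] {p q r : ι → ℝ≥0∞}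
    (hμ : ∀ s : Finset ι, μ {x | ∀ i ∈ s, x i = true} = ∏ i ∈ s, p i)
    (hν : ∀ s : Finset ι, ν {x | ∀ i ∈ s, x i = true} = ∏ i ∈ s, q i)
    (hρ : ∀ s : Finset ι, ρ {x | ∀ i ∈ s, x i = true} = ∏ i ∈ s, r i)
    (hr : ∀ i, r i = p i * q i) :
    MeasurePreserving (fun (z : (ι → Bool) × (ι → Bool)) i => z.1 i && z.2 i)
      (μ.prod ν) ρ := by
  have hmeas : Measurable fun (z : (ι → Bool) × (ι → Bool)) i => z.1 i && z.2 i := by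
    refine measurable_pi_lambda _ fun i => ?_
    exact (measurable_of_countable fun b : Bool × Bool => b.1 && b.2).comp
      (f := fun z : (ι → Bool) × (ι → Bool) => (z.1 i, z.2 i)) (by fun_prop)
  refine ⟨hmeas, ?_⟩
  refine measure_ext_of_forall_true fun s => ?_
  rw [Measure.map_apply hmeas (measurableSet_forall_true s), hρ]
  have : (fun (z : (ι → Bool) × (ι → Bool)) i => z.1 i && z.2 i) ⁻¹'
      {x | ∀ i ∈ s, x i = true} =
      {x | ∀ i ∈ s, x i = true} ×ˢ {x | ∀ i ∈ s, x i = true} := by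
    ext z
    simp only [mem_preimage, mem_ofPred_eq, mem_prod, Bool.and_eq_true]
    grind
  rw [this, Measure.prod_prod, hμ, hν]
  simp only [hr, Finset.prod_mul_distrib]

/-- A zero-one law for null measurable sets invariant under finite modifications. -/
theorem IsBernoulli.measure_eq_zero_or_one {ι : Type*} {μ : Measure (ι → Bool)} {p : ι → ℝ≥0∞}
    (hμ : IsBernoulli μ p) {S : Set (ι → Bool)} (hS : NullMeasurableSet S μ)
    (htail : ∀ x y : ι → Bool, {i | x i ≠ y i}.Finite → x ∈ S → y ∈ S) :
    μ S = 0 ∨ μ S = 1 := by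
  classical
  have := hμ.1
  have key : μ.restrict S = μ S • μ := by
    refine measure_ext_of_forall_true fun s => ?_
    have hT := measurePreserving_piecewise hμ hμ hμ (s : Set ι) (by simp)
    rw [Measure.restrict_apply (measurableSet_forall_true s), Measure.smul_apply, smul_eq_mul,
      ← hT.measure_preimage ((measurableSet_forall_true s).nullMeasurableSet.inter hS),
      mul_comm, ← Measure.prod_prod]
    congr 1
    ext z
    have h1 : {i | (s : Set ι).piecewise z.1 z.2 i ≠ z.2 i}.Finite :=
      s.finite_toSet.subset fun i hi => by
        by_contra h
        exact hi (by simp [h])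
    have h2 : {i | z.2 i ≠ (s : Set ι).piecewise z.1 z.2 i}.Finite := by
      simpa only [ne_comm] using h1
    have h3 : (s : Set ι).piecewise z.1 z.2 ∈ S ↔ z.2 ∈ S := ⟨htail _ _ h1, htail _ _ h2⟩
    simp only [mem_preimage, mem_inter_iff, mem_prod, h3, mem_ofPred_eq]
    refine and_congr_left fun _ => forall₂_congr fun i hi => ?_
    simp [hi]
  have hsq : μ S * 1 = μ S * μ S := by
    have h := congrArg (fun m => m S) key
    simpa using h
  rcases eq_or_ne (μ S) 0 with h | h
  · exact .inl h
  · exact .inr ((ENNReal.mul_right_inj h (measure_ne_top μ S)).1 hsq).symm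

theorem filterSet_mono {F : Filter ℕ} {x y : ℕ → Bool} (hx : x ∈ filterSet F)
    (h : ∀ n, x n = true → y n = true) : y ∈ filterSet F :=
  mem_of_superset (show {n | x n = true} ∈ F from hx) h

theorem filterSet_congr_finite {F : Filter ℕ} (hF : F ≤ cofinite) {x y : ℕ → Bool}
    (hxy : {n | x n ≠ y n}.Finite) (hx : x ∈ filterSet F) : y ∈ filterSet F := by
  have h : ∀ᶠ n in F, ¬ (x n ≠ y n) := hF hxy.eventually_cofinite_notMem
  have hx' : ∀ᶠ n in F, x n = true := hx
  show ∀ᶠ n in F, y n = true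
  filter_upwards [h, hx'] with n h1 h2
  exact (not_not.1 h1) ▸ h2

theorem nonmeasurable_min (p q : ℕ → ℝ≥0∞)
    (hp : ∀ n, 0 < p n ∧ p n ≤ 1 / 2) (hq : ∀ n, 0 < q n ∧ q n ≤ 1 / 2)
    (μp μq μr : Measure (ℕ → Bool)) (hμp : IsBernoulli μp p) (hμq : IsBernoulli μq q)
    (hμr : IsBernoulli μr fun n => min (p n) (q n))
    (F : Filter ℕ) [F.NeBot] (hF : F ≤ Filter.cofinite)
    (h1 : ¬ NullMeasurableSet (filterSet F) μp)
    (h2 : ¬ NullMeasurableSet (filterSet F) μq) :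
    ¬ NullMeasurableSet (filterSet F) μr := by
  classical
  have := hμp.1
  have := hμq.1
  have := hμr.1
  intro h
  rcases hμr.measure_eq_zero_or_one h fun x y => filterSet_congr_finite hF with h0 | h0
  · have hT := measurePreserving_piecewise hμp hμq hμr {n | p n ≤ q n}
      (fun n => by simp [min_def])
    have hae : ∀ᵐ x ∂μr, x ∉ filterSet F := measure_eq_zero_iff_ae_notMem.1 h0
    have hpq := Measure.ae_ae_of_ae_prod (hT.quasiMeasurePreserving.ae hae)
    have hp0 : ∃ᵐ x ∂μp, x ∈ filterSet F := frequently_ae_mem_iff.2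
      fun h => h1 (NullMeasurableSet.of_null h)
    have hq0 : ∃ᵐ y ∂μq, y ∈ filterSet F := frequently_ae_mem_iff.2
      fun h => h2 (NullMeasurableSet.of_null h)
    obtain ⟨x, hx, hxy⟩ := (hp0.and_eventually hpq).exists
    obtain ⟨y, hy, hxy⟩ := (hq0.and_eventually hxy).exists
    refine hxy (mem_of_superset (inter_mem hx hy) fun n hn => ?_)
    by_cases hn' : p n ≤ q n
    · simpa [Set.piecewise, hn'] using hn.1
    · simpa [Set.piecewise, hn'] using hn.2
  · have hae : ∀ᵐ x ∂μr, x ∈ filterSet F := (prob_compl_eq_zero_iff₀ h).2 h0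
    have hpt : ∀ n, p n ≠ ∞ := fun n =>
      ne_top_of_le_ne_top (by simp) (hp n).2
    obtain ⟨ν, _, hν⟩ := exists_isProbabilityMeasure_forall_true
      (fun n => min (p n) (q n) / p n)
      (fun n => ENNReal.div_le_of_le_mul (by simp))
    have hT := measurePreserving_and hμp.apply_forall_true hν hμr.apply_forall_true
      (fun n => (ENNReal.mul_div_cancel (hp n).1.ne' (hpt n)).symm)
    have hpν := Measure.ae_ae_of_ae_prod (hT.quasiMeasurePreserving.ae hae)
    have hfull : ∀ᵐ x ∂μp, x ∈ filterSet F := by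
      filter_upwards [hpν] with x hx
      obtain ⟨u, hu⟩ := hx.exists
      exact filterSet_mono hu fun n hn => (Bool.and_eq_true _ _ ▸ hn).1
    exact h1 (NullMeasurableSet.of_compl (NullMeasurableSet.of_null hfull))
end

section
/- Every μ_p̂-measurable nonprincipal filter on ω extends to a μ_p̂-measurable filter which does not have the Baire property. -/
open MeasureTheory Filter Set
open scoped ENNReal

open scoped Topology

/-! ### Topology of the Cantor space -/

theorem exists_cylinder_subset_of_mem_nhds {x : ℕ → Bool} {W : Set (ℕ → Bool)} (hW : W ∈ 𝓝 x) :
    ∃ N : ℕ, ∀ y : ℕ → Bool, (∀ i < N, y i = x i) → y ∈ W := by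
  obtain ⟨V, hVW, hV, hxV⟩ := mem_nhds_iff.1 hW
  obtain ⟨I, u, hu, huV⟩ := isOpen_pi_iff.1 hV x hxV
  refine ⟨I.sup id + 1, fun y hy => hVW (huV fun i hi => ?_)⟩
  rw [hy i (Nat.lt_succ_of_le (Finset.le_sup (f := id) hi))]
  exact (hu i hi).2

theorem isOpen_setOf_eqOn {D : Set ℕ} (hD : D.Finite) (x : ℕ → Bool) :
    IsOpen {y : ℕ → Bool | ∀ i ∈ D, y i = x i} :=
  isOpen_set_pi (s := fun i => {x i}) hD fun _ _ => isOpen_discrete _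

theorem setOf_eqOn_mem_nhds {D : Set ℕ} (hD : D.Finite) (x : ℕ → Bool) :
    {y : ℕ → Bool | ∀ i ∈ D, y i = x i} ∈ 𝓝 x :=
  (isOpen_setOf_eqOn hD x).mem_nhds fun _ _ => rfl

/-- Adding to `a` the preimage of `z` under a finite-to-one map is an open operation. -/
theorem isOpenMap_or_comp {f : ℕ → ℕ} (hf : ∀ j, (f ⁻¹' {j}).Finite) :
    IsOpenMap fun q : (ℕ → Bool) × (ℕ → Bool) => fun i => q.1 i || q.2 (f i) := by
  rw [isOpenMap_iff_nhds_le]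
  rintro ⟨a, z⟩ W hW
  rw [Filter.mem_map, nhds_prod_eq, Filter.mem_prod_iff] at hW
  obtain ⟨W₁, hW₁, W₂, hW₂, hsub⟩ := hW
  obtain ⟨N₁, hN₁⟩ := exists_cylinder_subset_of_mem_nhds hW₁
  obtain ⟨N₂, hN₂⟩ := exists_cylinder_subset_of_mem_nhds hW₂
  obtain ⟨M, hM₂, hM₁⟩ : ∃ M, N₂ ≤ M ∧ ∀ i < N₁, f i < M := by
    refine ⟨max N₂ ((Finset.range N₁).sup f + 1), le_max_left _ _, fun i hi => ?_⟩
    exact lt_max_of_lt_right (Nat.lt_succ_of_le (Finset.le_sup (f := f) (Finset.mem_range.2 hi)))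
  have hfin : {i | f i < M}.Finite := by
    have : {i | f i < M} = ⋃ j ∈ Set.Iio M, f ⁻¹' {j} := by ext; simp
    rw [this]
    exact (Set.finite_Iio M).biUnion fun j _ => hf j
  refine Filter.mem_of_superset (setOf_eqOn_mem_nhds hfin _) fun x hx => ?_
  have hmem : ((fun i => if f i < M then a i else x i, fun j => if j < M then z j else false) :
      (ℕ → Bool) × (ℕ → Bool)) ∈ W₁ ×ˢ W₂ := by
    refine ⟨hN₁ _ fun i hi => by simp [hM₁ i hi], hN₂ _ fun i hi => ?_⟩
    simp [hi.trans_le hM₂]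
  have := hsub hmem
  simp only [Set.mem_preimage] at this
  convert this using 1
  funext i
  by_cases hi : f i < M
  · simpa [hi] using hx i hi
  · simp [hi]

theorem continuous_or_comp (f : ℕ → ℕ) :
    Continuous fun q : (ℕ → Bool) × (ℕ → Bool) => fun i => q.1 i || q.2 (f i) := by
  refine continuous_pi fun i => ?_
  have hor : Continuous fun q : Bool × Bool => q.1 || q.2 := continuous_of_discreteTopology
  have hpair : Continuous fun q : (ℕ → Bool) × (ℕ → Bool) => (q.1 i, q.2 (f i)) := by fun_prop
  exact hor.comp hpair

/-- The homeomorphism of the Cantor space flipping all coordinates from `N` on. -/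
def flipFrom (N : ℕ) : (ℕ → Bool) ≃ₜ (ℕ → Bool) where
  toFun x i := if i < N then x i else !x i
  invFun x i := if i < N then x i else !x i
  left_inv x := by funext i; by_cases h : i < N <;> simp [h]
  right_inv x := by funext i; by_cases h : i < N <;> simp [h]
  continuous_toFun := by
    refine continuous_pi fun i => ?_
    by_cases h : i < N
    · simpa [h] using continuous_apply i
    · simpa [h, Function.comp_def] using
        (continuous_of_discreteTopology (f := not)).comp (continuous_apply i)
  continuous_invFun := by
    refine continuous_pi fun i => ?_
    by_cases h : i < N
    · simpa [h] using continuous_apply i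
    · simpa [h, Function.comp_def] using
        (continuous_of_discreteTopology (f := not)).comp (continuous_apply i)

/-! ### Filters without the Baire property -/

theorem mem_filterSet_mono {G : Filter ℕ} {x y : ℕ → Bool} (hx : x ∈ filterSet G) (hxy : x ≤ y) :
    y ∈ filterSet G :=
  Filter.mem_of_superset hx fun i hi => by
    have := hxy i
    simp only [Set.mem_ofPred_eq] at hi ⊢
    rw [hi] at this
    exact top_le_iff.1 this

theorem not_mem_filterSet_of_finite {G : Filter ℕ} [G.NeBot] (hG : G ≤ cofinite) {x : ℕ → Bool}
    (hx : {i | x i = true}.Finite) : x ∉ filterSet G := fun h => by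
  have : {i | x i = true}ᶜ ∈ G := hG hx.compl_mem_cofinite
  simpa using Filter.inter_mem h this

theorem residual_compl_filterSet {G : Filter ℕ} [G.NeBot] (hG : G ≤ cofinite)
    (hB : BaireMeasurableSet (filterSet G)) : (filterSet G)ᶜ ∈ residual (ℕ → Bool) := by
  obtain ⟨u, hu, hGu⟩ := hB.residualEq_isOpen
  rw [Filter.eventuallyEq_set] at hGu
  obtain rfl | ⟨x, hx⟩ := u.eq_empty_or_nonempty
  · filter_upwards [hGu] with y hy using by simpa using hy
  obtain ⟨N, hN⟩ := exists_cylinder_subset_of_mem_nhds (hu.mem_nhds hx)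
  have h₂ := tendsto_residual_of_isOpenMap (flipFrom N).continuous (flipFrom N).isOpenMap hGu
  obtain ⟨y, hy, hyG, hyG'⟩ := (dense_of_mem_residual (Filter.inter_mem hGu h₂)).inter_open_nonempty
    _ (isOpen_setOf_eqOn (Set.finite_Iio N) x) ⟨x, fun _ _ => rfl⟩
  have h₃ : y ∈ filterSet G := hyG.2 (hN y hy)
  have h₄ : flipFrom N y ∈ filterSet G := by
    refine hyG'.2 (hN _ fun i hi => ?_)
    simpa [flipFrom, hi] using hy i hi
  exfalso
  have h₅ : (fun i => y i && flipFrom N y i) ∈ filterSet G :=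
    Filter.mem_of_superset (Filter.inter_mem h₃ h₄) fun i hi => by
      simpa using hi
  refine not_mem_filterSet_of_finite hG ((Set.finite_Iio N).subset fun i hi => ?_) h₅
  by_contra h
  simp only [Set.mem_Iio] at h
  simp [flipFrom, h] at hi

theorem not_baireMeasurableSet_filterSet {G : Filter ℕ} [G.NeBot] (hG : G ≤ cofinite)
    {f : ℕ → ℕ} (hf : ∀ j, (f ⁻¹' {j}).Finite) (hfG : ∀ Z : Set ℕ, f ⁻¹' Z ∈ G ∨ f ⁻¹' Zᶜ ∈ G) :
    ¬ BaireMeasurableSet (filterSet G) := fun hB => by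
  have hres := residual_compl_filterSet hG hB
  have h₁ := tendsto_residual_of_isOpenMap (continuous_or_comp f) (isOpenMap_or_comp hf) hres
  let e := (Homeomorph.refl (ℕ → Bool)).prodCongr (flipFrom 0)
  have h₂ := tendsto_residual_of_isOpenMap e.continuous e.isOpenMap h₁
  obtain ⟨⟨a, z⟩, hz₁, hz₂⟩ := (dense_of_mem_residual (Filter.inter_mem h₁ h₂)).nonempty
  rcases hfG {j | z j = true} with h | h
  · exact hz₁ (Filter.mem_of_superset h fun i hi => by
      have : z (f i) = true := hi
      simp [this])
  · exact hz₂ (Filter.mem_of_superset h fun i hi => by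
      have : z (f i) = false := by simpa using hi
      simp [e, flipFrom, this])

/-! ### Block families -/

/-- Membership in `U` depends only on the coordinates in `S`. -/
def DeterminedOn (U : Set (ℕ → Bool)) (S : Set ℕ) : Prop :=
  ∀ ⦃x y : ℕ → Bool⦄, (∀ i ∈ S, x i = y i) → x ∈ U → y ∈ U

theorem DeterminedOn.mono {U : Set (ℕ → Bool)} {S T : Set ℕ} (hU : DeterminedOn U S)
    (hST : S ⊆ T) : DeterminedOn U T :=
  fun _ _ hxy => hU fun i hi => hxy i (hST hi)

/-- A filter all of whose elements meet infinitely many members of a family of upper sets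
with finite disjoint supports, whose limsup is null, extends to a null filter without the Baire
property. -/
theorem exists_extension_of_blocks {μ : Measure (ℕ → Bool)} [NeZero μ] {F : Filter ℕ} [F.NeBot]
    (hF : F ≤ cofinite) {f : ℕ → ℕ} (hf : ∀ j, (f ⁻¹' {j}).Finite) {B : ℕ → Set (ℕ → Bool)}
    (hB : ∀ j, DeterminedOn (B j) (f ⁻¹' {j})) (hup : ∀ j, IsUpperSet (B j))
    (hnull : μ {x | ∃ᶠ j in atTop, x ∈ B j} = 0)
    (hFB : ∀ x ∈ filterSet F, ∃ᶠ j in atTop, x ∈ B j) :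
    ∃ G : Filter ℕ, G.NeBot ∧ G ≤ F ∧ NullMeasurableSet (filterSet G) μ ∧
      ¬ BaireMeasurableSet (filterSet G) := by
  let H : Filter ℕ :=
    { sets := {Z | ∃ x ∈ filterSet F, ∀ᶠ j in atTop, x ∈ B j → j ∈ Z}
      univ_sets := ⟨fun _ => true, by simp [filterSet], by simp⟩
      sets_of_superset := by
        rintro Z Z' ⟨x, hx, h⟩ hZ
        exact ⟨x, hx, h.mono fun j hj hxj => hZ (hj hxj)⟩
      inter_sets := by
        rintro Z Z' ⟨x, hx, h⟩ ⟨x', hx', h'⟩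
        refine ⟨x ⊓ x', Filter.mem_of_superset (Filter.inter_mem hx hx') fun i hi => ?_, ?_⟩
        · simpa using hi
        · filter_upwards [h, h'] with j hj hj' hxj
          exact ⟨hj (hup j inf_le_left hxj), hj' (hup j inf_le_right hxj)⟩ }
  have hH : H.NeBot := by
    refine ⟨fun h => ?_⟩
    obtain ⟨x, hx, h'⟩ := Filter.empty_mem_iff_bot.2 h
    obtain ⟨j, hj, hj'⟩ := ((hFB x hx).and_eventually h').exists
    exact hj' hj
  let U := Ultrafilter.of H
  have hUH : (U : Filter ℕ) ≤ H := Ultrafilter.of_le H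
  have hUtop : (U : Filter ℕ) ≤ atTop := fun Z hZ =>
    hUH ⟨fun _ => true, by simp [filterSet], Filter.Eventually.mono hZ fun j hj _ => hj⟩
  have key : ∀ y ∈ filterSet (F ⊓ comap f U), ∃ᶠ j in atTop, y ∈ B j := by
    intro y hy
    obtain ⟨X, hX, Y, ⟨Z, hZ, hZY⟩, hXY⟩ := Filter.mem_inf_iff.1 hy
    classical
    let x : ℕ → Bool := fun i => decide (i ∈ X)
    have hx : x ∈ filterSet F := by simpa [filterSet, x] using hX
    have hxU : {j | x ∈ B j} ∈ (U : Filter ℕ) := hUH ⟨x, hx, by simp⟩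
    have hyU : ∀ᶠ j in (U : Filter ℕ), y ∈ B j := by
      filter_upwards [hxU, hZ] with j hj hjZ
      have hle : (x ⊓ y) ≤ y := inf_le_right
      refine hup j hle (hB j (fun i hi => ?_) hj)
      have hiY : i ∈ Y := hZY (by rw [Set.mem_preimage, show f i = j from hi]; exact hjZ)
      by_cases hiX : i ∈ X
      · have : i ∈ {n | y n = true} := hXY ▸ ⟨hiX, hiY⟩
        have : y i = true := this
        simp [x, this]
      · simp [x, hiX]
    exact hyU.frequently.filter_mono hUtop
  have hne : (F ⊓ comap f U).NeBot := by
    refine ⟨fun hbot => ?_⟩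
    have h₀ := key (fun _ => false) (by simp [hbot, filterSet])
    refine NeZero.ne (μ Set.univ) (measure_mono_null (fun x _ => ?_) hnull)
    exact h₀.mono fun j hj => hup j (fun i => Bool.false_le _) hj
  refine ⟨F ⊓ comap f U, hne, inf_le_left, ?_, ?_⟩
  · exact NullMeasurableSet.of_null (measure_mono_null key hnull)
  · refine not_baireMeasurableSet_filterSet (inf_le_left.trans hF) hf fun Z => ?_
    refine (U.mem_or_compl_mem Z).imp (fun h => ?_) fun h => ?_ <;>
      exact Filter.mem_inf_of_right (Filter.preimage_mem_comap h)

/-! ### The Bernoulli measure -/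

open Classical in
/-- The point agreeing with `g` on `S` and with `y` off `S`. -/
noncomputable def merge (S : Set ℕ) (g y : ℕ → Bool) : ℕ → Bool :=
  fun i => if i ∈ S then g i else y i

theorem merge_of_mem {S : Set ℕ} {g y : ℕ → Bool} {i : ℕ} (hi : i ∈ S) : merge S g y i = g i :=
  if_pos hi

theorem merge_of_notMem {S : Set ℕ} {g y : ℕ → Bool} {i : ℕ} (hi : i ∉ S) :
    merge S g y i = y i :=
  if_neg hi

theorem measurable_merge (S : Set ℕ) :
    Measurable fun q : (ℕ → Bool) × (ℕ → Bool) => merge S q.1 q.2 := by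
  refine measurable_pi_lambda _ fun i => ?_
  by_cases hi : i ∈ S
  · simp only [merge_of_mem hi]
    exact (measurable_pi_apply i).comp measurable_fst
  · simp only [merge_of_notMem hi]
    exact (measurable_pi_apply i).comp measurable_snd

/-- The sets given by prescribing finitely many coordinates. -/
def cylinders : Set (Set (ℕ → Bool)) :=
  {C | ∃ (s : Finset ℕ) (f : ℕ → Bool), C = {x | ∀ i ∈ s, x i = f i}}

theorem isPiSystem_cylinders : IsPiSystem cylinders := by
  rintro _ ⟨s, f, rfl⟩ _ ⟨t, g, rfl⟩ ⟨z, hz₁, hz₂⟩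
  refine ⟨s ∪ t, z, ?_⟩
  ext x
  simp only [Set.mem_inter_iff, Set.mem_ofPred_eq, Finset.mem_union] at *
  constructor
  · rintro ⟨h₁, h₂⟩ i (hi | hi)
    · rw [h₁ i hi, hz₁ i hi]
    · rw [h₂ i hi, hz₂ i hi]
  · intro h
    exact ⟨fun i hi => by rw [h i (.inl hi), hz₁ i hi], fun i hi => by rw [h i (.inr hi), hz₂ i hi]⟩

theorem measurableSet_cylinder (s : Finset ℕ) (f : ℕ → Bool) :
    MeasurableSet {x : ℕ → Bool | ∀ i ∈ s, x i = f i} :=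
  (isOpen_setOf_eqOn s.finite_toSet f).measurableSet

theorem generateFrom_cylinders :
    (inferInstance : MeasurableSpace (ℕ → Bool)) = MeasurableSpace.generateFrom cylinders := by
  refine le_antisymm ?_ ?_
  · refine iSup_le fun i => ?_
    rw [← measurable_iff_comap_le]
    refine @measurable_to_bool _ (MeasurableSpace.generateFrom cylinders) _ ?_
    refine MeasurableSpace.measurableSet_generateFrom ⟨{i}, fun _ => true, ?_⟩
    ext x
    simp
  · refine MeasurableSpace.generateFrom_le ?_
    rintro _ ⟨s, f, rfl⟩
    exact measurableSet_cylinder s f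

theorem ext_of_cylinders {μ ν : Measure (ℕ → Bool)} [IsFiniteMeasure μ]
    (h : ∀ (s : Finset ℕ) (f : ℕ → Bool),
      μ {x | ∀ i ∈ s, x i = f i} = ν {x | ∀ i ∈ s, x i = f i}) : μ = ν := by
  refine ext_of_generate_finite _ generateFrom_cylinders isPiSystem_cylinders ?_ ?_
  · rintro _ ⟨s, f, rfl⟩
    exact h s f
  · simpa using h ∅ fun _ => true

theorem map_merge_prod {μ : Measure (ℕ → Bool)} {p : ℕ → ℝ≥0∞} (hμ : IsBernoulli μ p)
    (S : Set ℕ) : (μ.prod μ).map (fun q => merge S q.1 q.2) = μ := by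
  classical
  have := hμ.1
  have := Measure.isProbabilityMeasure_map (μ := μ.prod μ) (measurable_merge S).aemeasurable
  refine ext_of_cylinders fun s f => ?_
  rw [Measure.map_apply (measurable_merge S) (measurableSet_cylinder s f)]
  have : (fun q : (ℕ → Bool) × (ℕ → Bool) => merge S q.1 q.2) ⁻¹' {x | ∀ i ∈ s, x i = f i} =
      {x | ∀ i ∈ s.filter (· ∈ S), x i = f i} ×ˢ {x | ∀ i ∈ s.filter (· ∉ S), x i = f i} := by
    ext q
    simp only [Set.mem_preimage, Set.mem_ofPred_eq, Set.mem_prod, Finset.mem_filter, and_imp]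
    constructor
    · exact fun h => ⟨fun i hi hS => by rw [← h i hi, merge_of_mem hS],
        fun i hi hS => by rw [← h i hi, merge_of_notMem hS]⟩
    · rintro ⟨h₁, h₂⟩ i hi
      by_cases hS : i ∈ S
      · rw [merge_of_mem hS, h₁ i hi hS]
      · rw [merge_of_notMem hS, h₂ i hi hS]
  rw [this, Measure.prod_prod, hμ.2, hμ.2, hμ.2, Finset.prod_filter_mul_prod_filter_not]

theorem lintegral_measure_section {μ : Measure (ℕ → Bool)} {p : ℕ → ℝ≥0∞} (hμ : IsBernoulli μ p)
    (S : Set ℕ) {E : Set (ℕ → Bool)} (hE : MeasurableSet E) :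
    ∫⁻ g, μ {y | merge S g y ∈ E} ∂μ = μ E := by
  have := hμ.1
  conv_rhs => rw [← map_merge_prod hμ S, Measure.map_apply (measurable_merge S) hE,
    Measure.prod_apply (measurable_merge S hE)]
  rfl

theorem measurable_measure_section {μ : Measure (ℕ → Bool)} [SFinite μ]
    (S : Set ℕ) {E : Set (ℕ → Bool)} (hE : MeasurableSet E) :
    Measurable fun g => μ {y | merge S g y ∈ E} :=
  measurable_measure_prodMk_left (measurable_merge S hE)

theorem cylinder_pos {μ : Measure (ℕ → Bool)} {p : ℕ → ℝ≥0∞} (hμ : IsBernoulli μ p)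
    (hp : ∀ n, 0 < p n ∧ p n ≤ 1 / 2) (s : Finset ℕ) (f : ℕ → Bool) :
    μ {x | ∀ i ∈ s, x i = f i} ≠ 0 := by
  rw [hμ.2, Finset.prod_ne_zero_iff]
  intro i _
  split_ifs
  · exact (hp i).1.ne'
  · refine (tsub_pos_of_lt ((hp i).2.trans_lt ?_)).ne'
    simp [ENNReal.inv_lt_one]

/-- The points which can be moved into `E` by changing the coordinates below `n`. -/
def forgetBelow (n : ℕ) (E : Set (ℕ → Bool)) : Set (ℕ → Bool) :=
  {y | ∃ t, merge (Set.Iio n) t y ∈ E}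

theorem subset_forgetBelow (n : ℕ) (E : Set (ℕ → Bool)) : E ⊆ forgetBelow n E := fun x hx =>
  ⟨x, by convert hx using 1; funext i; by_cases hi : i ∈ Set.Iio n <;> simp [merge, hi]⟩

theorem exists_measure_forgetBelow_le {μ : Measure (ℕ → Bool)} {p : ℕ → ℝ≥0∞}
    (hμ : IsBernoulli μ p) (hp : ∀ n, 0 < p n ∧ p n ≤ 1 / 2) (n : ℕ) :
    ∃ c ≠ ∞, ∀ E, MeasurableSet E → μ (forgetBelow n E) ≤ c * μ E := by
  classical
  have := hμ.1
  let ind : Finset ℕ → ℕ → Bool := fun u i => decide (i ∈ u)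
  let C : (ℕ → Bool) → Set (ℕ → Bool) := fun t => {x | ∀ i ∈ Finset.range n, x i = t i}
  refine ⟨∑ u ∈ (Finset.range n).powerset, (μ (C (ind u)))⁻¹, ?_, fun E hE => ?_⟩
  · rw [ENNReal.sum_ne_top]
    exact fun u _ => ENNReal.inv_ne_top.2 (cylinder_pos hμ hp _ _)
  have hsec : ∀ t, μ {y | merge (Set.Iio n) t y ∈ E} ≤ (μ (C t))⁻¹ * μ E := by
    intro t
    rw [mul_comm, ← div_eq_mul_inv, ENNReal.le_div_iff_mul_le (.inl (cylinder_pos hμ hp _ _))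
      (.inl (measure_ne_top _ _)), mul_comm, ← Measure.prod_prod]
    conv_rhs => rw [← map_merge_prod hμ (Set.Iio n), Measure.map_apply (measurable_merge _) hE]
    refine measure_mono fun q hq => ?_
    have h : merge (Set.Iio n) q.1 q.2 = merge (Set.Iio n) t q.2 := by
      funext i
      by_cases hi : i ∈ Set.Iio n
      · rw [merge_of_mem hi, merge_of_mem hi, hq.1 i (Finset.mem_range.2 hi)]
      · rw [merge_of_notMem hi, merge_of_notMem hi]
    rw [Set.mem_preimage, h]
    exact hq.2
  have hcover : forgetBelow n E ⊆
      ⋃ u ∈ (Finset.range n).powerset, {y | merge (Set.Iio n) (ind u) y ∈ E} := by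
    rintro y ⟨t, ht⟩
    refine Set.mem_biUnion (x := (Finset.range n).filter fun i => t i = true)
      (Finset.mem_powerset.2 (Finset.filter_subset _ _)) ?_
    rw [Set.mem_ofPred_eq]
    convert ht using 1
    funext i
    by_cases hi : i ∈ Set.Iio n
    · rw [merge_of_mem hi, merge_of_mem hi]
      have : i < n := hi
      simp [ind, this]
    · rw [merge_of_notMem hi, merge_of_notMem hi]
  calc μ (forgetBelow n E) ≤ _ := measure_mono hcover
    _ ≤ ∑ u ∈ (Finset.range n).powerset, μ {y | merge (Set.Iio n) (ind u) y ∈ E} :=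
        measure_biUnion_finset_le _ _
    _ ≤ _ := by
        rw [Finset.sum_mul]
        exact Finset.sum_le_sum fun u _ => hsec _

/-! ### Measurable filters are null -/

theorem mem_filterSet_merge_iff {F : Filter ℕ} (hF : F ≤ cofinite) {S : Set ℕ} (hS : S.Finite)
    (g y : ℕ → Bool) : merge S g y ∈ filterSet F ↔ y ∈ filterSet F := by
  refine Filter.congr_sets ?_
  filter_upwards [hF hS.compl_mem_cofinite] with i hi
  simp [merge_of_notMem hi]

theorem measure_filterSet_mul_self {μ : Measure (ℕ → Bool)} {p : ℕ → ℝ≥0∞} (hμ : IsBernoulli μ p)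
    {F : Filter ℕ} (hF : F ≤ cofinite) (hmeas : NullMeasurableSet (filterSet F) μ) :
    μ (filterSet F) = μ (filterSet F) * μ (filterSet F) := by
  have := hμ.1
  have h : μ.restrict (filterSet F) = μ (filterSet F) • μ := by
    refine ext_of_cylinders fun s f => ?_
    have hC := measurableSet_cylinder s f
    rw [Measure.restrict_apply hC, Measure.smul_apply, smul_eq_mul, mul_comm, ← Measure.prod_prod]
    have hmap := map_merge_prod hμ (s : Set ℕ)
    conv_lhs => rw [← hmap]
    rw [Measure.map_apply₀ (measurable_merge _).aemeasurable
      (by rw [hmap]; exact hC.nullMeasurableSet.inter hmeas)]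
    congr 1
    ext q
    simp only [Set.mem_preimage, Set.mem_inter_iff, Set.mem_prod,
      mem_filterSet_merge_iff hF s.finite_toSet, Set.mem_ofPred_eq]
    refine and_congr_left fun _ => forall₂_congr fun i hi => ?_
    rw [merge_of_mem (Finset.mem_coe.2 hi)]
  have h' := congrArg (fun ν => ν (filterSet F)) h
  simpa [Measure.restrict_apply₀' hmeas] using h'

/-- Two disjoint random sets, both with the given Bernoulli distribution. -/
theorem exists_disjoint_coupling {μ : Measure (ℕ → Bool)} {p : ℕ → ℝ≥0∞} (hμ : IsBernoulli μ p)
    (hp : ∀ n, p n ≤ 1 / 2) :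
    ∃ ν : Measure (ℕ → Fin 3), IsProbabilityMeasure ν ∧
      ν.map (fun w i => decide (w i = 0)) = μ ∧ ν.map (fun w i => decide (w i = 1)) = μ := by
  have hp' : ∀ n, p n + p n ≤ 1 := fun n =>
    (add_le_add (hp n) (hp n)).trans_eq (ENNReal.add_halves 1)
  let κ : ℕ → Measure (Fin 3) := fun n =>
    p n • Measure.dirac 0 + p n • Measure.dirac 1 + (1 - (p n + p n)) • Measure.dirac 2
  have hκ : ∀ n, IsProbabilityMeasure (κ n) := fun n => ⟨by simp [κ, add_tsub_cancel_of_le (hp' n)]⟩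
  have := hμ.1
  have hfin : ∀ n, p n ≠ ∞ := fun n => ((hp n).trans_lt (by simp)).ne
  have hsub : ∀ n, p n + (1 - (p n + p n)) = 1 - p n := fun n => by
    refine ENNReal.eq_sub_of_add_eq (hfin n) ?_
    rw [add_right_comm, add_tsub_cancel_of_le (hp' n)]
  have hmap : ∀ φ : Fin 3 → Bool,
      (∀ n b, κ n (φ ⁻¹' {b}) = if b = true then p n else 1 - p n) →
      (Measure.infinitePi κ).map (fun w i => φ (w i)) = μ := by
    intro φ hφ
    have hmeas : Measurable fun (w : ℕ → Fin 3) i => φ (w i) :=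
      measurable_pi_lambda _ fun i => (measurable_of_finite φ).comp (measurable_pi_apply i)
    have := Measure.isProbabilityMeasure_map (μ := Measure.infinitePi κ) hmeas.aemeasurable
    refine ext_of_cylinders fun s f => ?_
    rw [Measure.map_apply hmeas (measurableSet_cylinder s f), hμ.2]
    have : (fun (w : ℕ → Fin 3) i => φ (w i)) ⁻¹' {x | ∀ i ∈ s, x i = f i} =
        Set.pi s fun i => φ ⁻¹' {f i} := by
      ext w
      simp
    rw [this, Measure.infinitePi_pi κ fun i _ => MeasurableSet.of_discrete]
    exact Finset.prod_congr rfl fun i _ => hφ i (f i)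
  refine ⟨Measure.infinitePi κ, inferInstance, hmap (fun a => decide (a = 0)) ?_,
    hmap (fun a => decide (a = 1)) ?_⟩
  · rintro n (_ | _) <;> simp [κ, Set.indicator, hsub]
  · rintro n (_ | _) <;> simp [κ, Set.indicator, hsub]

theorem measure_filterSet_eq_zero {μ : Measure (ℕ → Bool)} {p : ℕ → ℝ≥0∞} (hμ : IsBernoulli μ p)
    (hp : ∀ n, p n ≤ 1 / 2) {F : Filter ℕ} [F.NeBot] (hF : F ≤ cofinite)
    (hmeas : NullMeasurableSet (filterSet F) μ) : μ (filterSet F) = 0 := by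
  have := hμ.1
  by_contra h₀
  have h₁ : μ (filterSet F) = 1 :=
    ((ENNReal.mul_eq_left h₀ (measure_ne_top _ _)).1 (measure_filterSet_mul_self hμ hF hmeas).symm)
  have hae : ∀ᵐ x ∂μ, x ∈ filterSet F := (mem_ae_iff_prob_eq_one₀ hmeas).2 h₁
  obtain ⟨ν, hν, hν₀, hν₁⟩ := exists_disjoint_coupling hμ hp
  have hm : ∀ a : Fin 3, Measurable fun (w : ℕ → Fin 3) i => decide (w i = a) := fun a =>
    measurable_pi_lambda _ fun i =>
      (measurable_of_finite fun b : Fin 3 => decide (b = a)).comp (measurable_pi_apply i)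
  have h₂ := ae_of_ae_map (hm 0).aemeasurable (hν₀.symm ▸ hae)
  have h₃ := ae_of_ae_map (hm 1).aemeasurable (hν₁.symm ▸ hae)
  obtain ⟨w, hw₀, hw₁⟩ := (h₂.and h₃).exists
  obtain ⟨i, hi₀, hi₁⟩ := Filter.nonempty_of_mem (Filter.inter_mem hw₀ hw₁)
  simp only [Set.mem_ofPred_eq, decide_eq_true_eq] at hi₀ hi₁
  simp [hi₀] at hi₁

/-! ### Covering null sets by small blocks -/

theorem DeterminedOn.mem_iff {U : Set (ℕ → Bool)} {S : Set ℕ} (hU : DeterminedOn U S)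
    {x y : ℕ → Bool} (h : ∀ i ∈ S, x i = y i) : x ∈ U ↔ y ∈ U :=
  ⟨hU h, hU fun i hi => (h i hi).symm⟩

theorem DeterminedOn.union {U V : Set (ℕ → Bool)} {S : Set ℕ} (hU : DeterminedOn U S)
    (hV : DeterminedOn V S) : DeterminedOn (U ∪ V) S :=
  fun _ _ h => Or.imp (hU h) (hV h)

theorem DeterminedOn.diff {U V : Set (ℕ → Bool)} {S : Set ℕ} (hU : DeterminedOn U S)
    (hV : DeterminedOn V S) : DeterminedOn (U \ V) S :=
  fun _ _ h => And.imp (hU h) (mt (hV.mem_iff h).2)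

theorem DeterminedOn.biUnion {ι : Type*} {I : Set ι} {U : ι → Set (ℕ → Bool)} {S : Set ℕ}
    (hU : ∀ i, DeterminedOn (U i) S) : DeterminedOn (⋃ i ∈ I, U i) S := by
  intro x y h hx
  simp only [Set.mem_iUnion] at hx ⊢
  obtain ⟨i, hi, hx⟩ := hx
  exact ⟨i, hi, hU i h hx⟩

theorem DeterminedOn.measurableSet {U : Set (ℕ → Bool)} {S : Set ℕ} (hU : DeterminedOn U S)
    (hS : S.Finite) : MeasurableSet U :=
  (isOpen_iff_mem_nhds.2 fun x hx => Filter.mem_of_superset (setOf_eqOn_mem_nhds hS x)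
    fun _ hy => hU (fun i hi => (hy i hi).symm) hx).measurableSet

theorem DeterminedOn.forgetBelow {E : Set (ℕ → Bool)} {n N : ℕ}
    (hE : DeterminedOn E (Set.Iio N)) : DeterminedOn (forgetBelow n E) (Set.Ico n N) := by
  rintro x y h ⟨t, ht⟩
  refine ⟨t, hE (fun i hi => ?_) ht⟩
  by_cases hin : i ∈ Set.Iio n
  · rw [merge_of_mem hin, merge_of_mem hin]
  · rw [merge_of_notMem hin, merge_of_notMem hin, h i ⟨not_lt.1 hin, hi⟩]

/-- The points whose membership in `V` is ensured by their first `N` coordinates. -/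
def decidedBy (V : Set (ℕ → Bool)) (N : ℕ) : Set (ℕ → Bool) :=
  {x | ∀ y : ℕ → Bool, (∀ i < N, y i = x i) → y ∈ V}

theorem determinedOn_decidedBy (V : Set (ℕ → Bool)) (N : ℕ) :
    DeterminedOn (decidedBy V N) (Set.Iio N) :=
  fun _ _ h hx z hz => hx z fun i hi => (hz i hi).trans (h i hi).symm

theorem measurableSet_decidedBy (V : Set (ℕ → Bool)) (N : ℕ) : MeasurableSet (decidedBy V N) :=
  (determinedOn_decidedBy V N).measurableSet (Set.finite_Iio N)

theorem decidedBy_subset (V : Set (ℕ → Bool)) (N : ℕ) : decidedBy V N ⊆ V :=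
  fun x hx => hx x fun _ _ => rfl

theorem decidedBy_mono (V : Set (ℕ → Bool)) : Monotone (decidedBy V) :=
  fun _ _ hNM _ hx y hy => hx y fun i hi => hy i (hi.trans_le hNM)

theorem exists_mem_decidedBy {V : Set (ℕ → Bool)} (hV : IsOpen V) {x : ℕ → Bool} (hx : x ∈ V) :
    ∃ N, x ∈ decidedBy V N :=
  exists_cylinder_subset_of_mem_nhds (hV.mem_nhds hx)

theorem tendsto_measure_diff_decidedBy (μ : Measure (ℕ → Bool)) [IsFiniteMeasure μ]
    {V : Set (ℕ → Bool)} (hV : IsOpen V) :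
    Tendsto (fun N => μ (V \ decidedBy V N)) atTop (𝓝 0) := by
  have h := tendsto_measure_iInter_atTop (μ := μ) (s := fun N => V \ decidedBy V N)
    (fun N => (hV.measurableSet.diff (measurableSet_decidedBy V N)).nullMeasurableSet)
    (fun _ _ hNM => Set.sdiff_subset_sdiff_right (decidedBy_mono V hNM)) ⟨0, measure_ne_top _ _⟩
  have h₀ : ⋂ N, V \ decidedBy V N = ∅ := by
    refine Set.eq_empty_of_forall_notMem fun x hx => ?_
    rw [Set.mem_iInter] at hx
    obtain ⟨N, hN⟩ := exists_mem_decidedBy hV (hx 0).1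
    exact (hx N).2 hN
  rwa [h₀, measure_empty] at h

/-- Every null set is contained in the limsup of a sequence of small sets, each determined by two
consecutive intervals of an interval partition. -/
theorem exists_block_cover {μ : Measure (ℕ → Bool)} {p : ℕ → ℝ≥0∞} (hμ : IsBernoulli μ p)
    (hp : ∀ n, 0 < p n ∧ p n ≤ 1 / 2) {A : Set (ℕ → Bool)} (hA : μ A = 0) {ε : ℕ → ℝ≥0∞}
    (hε : ∀ k, 0 < ε k) :
    ∃ (n : ℕ → ℕ) (D : ℕ → Set (ℕ → Bool)), StrictMono n ∧
      (∀ k, DeterminedOn (D k) (Set.Ico (n k) (n (k + 2)))) ∧ (∀ k, μ (D k) ≤ ε k) ∧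
      ∀ x ∈ A, ∃ᶠ k in atTop, x ∈ D k := by
  have := hμ.1
  have hV : ∀ m : ℕ, ∃ V ⊇ A, IsOpen V ∧ μ V < (m : ℝ≥0∞)⁻¹ := fun m =>
    A.exists_isOpen_lt_of_lt _ (by simp [hA])
  choose V hAV hVo hVμ using hV
  choose c hc hcμ using exists_measure_forgetBelow_le hμ hp
  let T : ℕ → ℕ → Set (ℕ → Bool) := fun a N =>
    V N ∪ ⋃ m ∈ Finset.range (a + 1), V m \ decidedBy (V m) N
  have hT : ∀ a, Tendsto (fun N => c a * μ (T a N)) atTop (𝓝 0) := by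
    intro a
    have h₁ : Tendsto (fun N => μ (V N)) atTop (𝓝 0) :=
      tendsto_of_tendsto_of_tendsto_of_le_of_le tendsto_const_nhds
        ENNReal.tendsto_inv_nat_nhds_zero (fun _ => zero_le) fun N => (hVμ N).le
    have h₂ : Tendsto (fun N => ∑ m ∈ Finset.range (a + 1), μ (V m \ decidedBy (V m) N)) atTop
        (𝓝 0) := by
      simpa using tendsto_finsetSum (Finset.range (a + 1))
        fun m _ => tendsto_measure_diff_decidedBy μ (hVo m)
    have h₃ := ENNReal.Tendsto.const_mul (a := c a) (h₁.add h₂) (.inr (hc a))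
    simp only [add_zero, mul_zero] at h₃
    refine tendsto_of_tendsto_of_tendsto_of_le_of_le tendsto_const_nhds h₃ (fun _ => zero_le)
      fun N => ?_
    dsimp only
    gcongr
    exact (measure_union_le _ _).trans (by gcongr; exact measure_biUnion_finset_le _ _)
  have hstep : ∀ k a, ∃ b, a < b ∧ c a * μ (T a b) ≤ ε k := fun k a =>
    ((eventually_gt_atTop a).and ((hT a).eventually (ge_mem_nhds (hε k)))).exists
  choose next hnext hnextμ using hstep
  let n : ℕ → ℕ := fun k => Nat.rec 0 next k
  have hn : StrictMono n := strictMono_nat_of_lt_succ fun k => hnext k (n k)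
  have hnμ : ∀ k, c (n k) * μ (T (n k) (n (k + 1))) ≤ ε k := fun k => hnextμ k (n k)
  let E : ℕ → Set (ℕ → Bool) := fun k => decidedBy (V (n (k + 1))) (n (k + 2)) ∪
    ⋃ m ∈ Set.Iic (n k), decidedBy (V m) (n (k + 2)) \ decidedBy (V m) (n (k + 1))
  have hE : ∀ k, DeterminedOn (E k) (Set.Iio (n (k + 2))) := fun k =>
    (determinedOn_decidedBy _ _).union <| DeterminedOn.biUnion fun m =>
      (determinedOn_decidedBy _ _).diff ((determinedOn_decidedBy _ _).mono
        (Set.Iio_subset_Iio (hn.monotone (show k + 1 ≤ k + 2 by omega))))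
  have hET : ∀ k, E k ⊆ T (n k) (n (k + 1)) := by
    rintro k x (hx | hx)
    · exact .inl (decidedBy_subset _ _ hx)
    · simp only [Set.mem_iUnion] at hx
      obtain ⟨m, hm, hx⟩ := hx
      refine .inr (Set.mem_biUnion (x := m) ?_ ⟨decidedBy_subset _ _ hx.1, hx.2⟩)
      simpa [Nat.lt_succ_iff] using hm
  refine ⟨n, fun k => forgetBelow (n k) (E k), hn, fun k => (hE k).forgetBelow, fun k => ?_,
    fun x hx => ?_⟩
  · refine (hcμ (n k) _ ((hE k).measurableSet (Set.finite_Iio _))).trans (le_trans ?_ (hnμ k))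
    gcongr
    exact hET k
  · rw [Filter.frequently_atTop]
    intro k
    have hex : ∃ l, x ∈ decidedBy (V (n (k + 1))) (n (k + l + 2)) := by
      obtain ⟨N, hN⟩ := exists_mem_decidedBy (hVo (n (k + 1))) (hAV _ hx)
      refine ⟨N, decidedBy_mono _ ?_ hN⟩
      have := hn.le_apply (x := k + N + 2)
      omega
    classical
    refine ⟨k + Nat.find hex, by omega, subset_forgetBelow _ _ ?_⟩
    have hl := Nat.find_spec hex
    rcases h : Nat.find hex with _ | l
    · rw [h] at hl
      exact .inl hl
    · rw [h] at hl
      refine .inr (Set.mem_biUnion (x := n (k + 1))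
        (hn.monotone (show k + 1 ≤ k + (l + 1) by omega)) ⟨hl, ?_⟩)
      rw [show k + (l + 1) + 1 = k + l + 2 by omega]
      exact Nat.find_min hex (m := l) (by omega)

/-! ### Upper interiors and gluing -/

/-- The largest upper set contained in `U`. -/
def upperInterior (U : Set (ℕ → Bool)) : Set (ℕ → Bool) := {x | ∀ y, x ≤ y → y ∈ U}

theorem upperInterior_subset (U : Set (ℕ → Bool)) : upperInterior U ⊆ U := fun x hx => hx x le_rfl

theorem isUpperSet_upperInterior (U : Set (ℕ → Bool)) : IsUpperSet (upperInterior U) :=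
  fun _ _ hxy hx z hz => hx z (hxy.trans hz)

theorem DeterminedOn.upperInterior {U : Set (ℕ → Bool)} {S : Set ℕ} (hU : DeterminedOn U S) :
    DeterminedOn (upperInterior U) S := by
  intro x x' h hx y hy
  refine hU (fun i hi => ?_) (hx (x ⊔ y) le_sup_left)
  rw [Pi.sup_apply, h i hi]
  exact sup_eq_right.2 (hy i)

theorem exists_le_eventually_notMem {f : ℕ → ℕ} {U : ℕ → Set (ℕ → Bool)}
    (hU : ∀ j, DeterminedOn (U j) (f ⁻¹' {j})) {x : ℕ → Bool}
    (hx : ∀ᶠ j in atTop, x ∉ upperInterior (U j)) :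
    ∃ y, x ≤ y ∧ ∀ᶠ j in atTop, y ∉ U j := by
  have : ∀ j, ∃ y, x ≤ y ∧ (x ∉ upperInterior (U j) → y ∉ U j) := fun j => by
    by_cases h : x ∈ upperInterior (U j)
    · exact ⟨x, le_rfl, fun h' => absurd h h'⟩
    · simp only [upperInterior, Set.mem_ofPred_eq, not_forall] at h
      obtain ⟨y, hxy, hy⟩ := h
      exact ⟨y, hxy, fun _ => hy⟩
  choose Y hxY hY using this
  refine ⟨fun i => Y (f i) i, fun i => hxY _ i, hx.mono fun j hj h => hY j hj (hU j ?_ h)⟩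
  intro i hi
  rw [show f i = j from hi]

theorem exists_block_index {m : ℕ → ℕ} (hm : StrictMono m) :
    ∃ f : ℕ → ℕ, (∀ j, Set.Ico (m j) (m (j + 1)) ⊆ f ⁻¹' {j}) ∧ ∀ j, (f ⁻¹' {j}).Finite := by
  classical
  refine ⟨fun i => Nat.findGreatest (fun j => m j ≤ i) i, fun j i hi => ?_, fun j => ?_⟩
  · refine Nat.findGreatest_eq_iff.2 ⟨hm.le_apply.trans hi.1, fun _ => hi.1, fun l hl _ h => ?_⟩
    exact absurd (hi.2.trans_le (hm.monotone hl)) (not_lt.2 h)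
  · refine (Set.finite_Iio (m (j + 1))).subset fun i hi => ?_
    by_contra h
    rw [Set.mem_Iio, not_lt] at h
    have h' := Nat.le_findGreatest (P := fun j => m j ≤ i) (hm.le_apply.trans h) h
    rw [show Nat.findGreatest (fun j => m j ≤ i) i = j from hi] at h'
    omega

theorem DeterminedOn.left_merge {D : Set (ℕ → Bool)} {S A : Set ℕ} (hD : DeterminedOn D S)
    {g g' : ℕ → Bool} (h : ∀ i ∈ S ∩ A, g i = g' i) (y : ℕ → Bool) :
    merge A g y ∈ D ↔ merge A g' y ∈ D :=
  hD.mem_iff fun i hi => by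
    by_cases hA : i ∈ A
    · rw [merge_of_mem hA, merge_of_mem hA, h i ⟨hi, hA⟩]
    · rw [merge_of_notMem hA, merge_of_notMem hA]

theorem DeterminedOn.right_merge {D : Set (ℕ → Bool)} {S A : Set ℕ} (hD : DeterminedOn D S)
    (g : ℕ → Bool) : DeterminedOn {y | merge A g y ∈ D} (S \ A) := fun y y' h =>
  hD fun i hi => by
    by_cases hA : i ∈ A
    · rw [merge_of_mem hA, merge_of_mem hA]
    · rw [merge_of_notMem hA, merge_of_notMem hA, h i ⟨hi, hA⟩]

theorem eventually_of_eventually_blocks {P : ℕ → Prop} (r : ℕ)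
    (h : ∀ᶠ j in atTop, P (2 * j + r) ∧ P (2 * j + r + 1)) : ∀ᶠ k in atTop, P k := by
  obtain ⟨J, hJ⟩ := Filter.eventually_atTop.1 h
  filter_upwards [Filter.eventually_ge_atTop (2 * J + r)] with k hk
  obtain hk' | hk' : k = 2 * ((k - r) / 2) + r ∨ k = 2 * ((k - r) / 2) + r + 1 := by omega
  · rw [hk']
    exact (hJ _ (by omega)).1
  · rw [hk']
    exact (hJ _ (by omega)).2

theorem measure_frequently_upperInterior_union_eq_zero {μ : Measure (ℕ → Bool)}
    {U : ℕ → Set (ℕ → Bool)} (hU : ∀ k, μ (U k) ≤ 2⁻¹ ^ k) (r : ℕ) :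
    μ {x | ∃ᶠ j in atTop, x ∈ upperInterior (U (2 * j + (r + 1)) ∪ U (2 * j + (r + 1) + 1))} = 0 := by
  have hle : ∀ j k : ℕ, j + 1 ≤ k → μ (U k) ≤ 2⁻¹ ^ (j + 1) := fun j k h =>
    (hU k).trans (pow_le_pow_of_le_one zero_le (by simp) h)
  refine measure_setOfPred_frequently_eq_zero (ne_top_of_le_ne_top ?_ (ENNReal.tsum_le_tsum fun j =>
    ((measure_mono (upperInterior_subset _)).trans (measure_union_le _ _)).trans
      (add_le_add (hle j _ (by omega)) (hle j _ (by omega)))))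
  rw [ENNReal.tsum_add, ENNReal.tsum_geometric_add_one]
  simp [ENNReal.mul_eq_top]

theorem extend_to_measurable_without_baire (μ : Measure (ℕ → Bool)) (p : ℕ → ℝ≥0∞)
    (hp : ∀ n, 0 < p n ∧ p n ≤ 1 / 2) (hμ : IsBernoulli μ p)
    (F : Filter ℕ) [F.NeBot] (hF : F ≤ Filter.cofinite)
    (hmeas : NullMeasurableSet (filterSet F) μ) :
    ∃ G : Filter ℕ, G.NeBot ∧ G ≤ F ∧ NullMeasurableSet (filterSet G) μ ∧
      ¬ BaireMeasurableSet (filterSet G) := by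
  have := hμ.1
  have hpow : ∀ k : ℕ, (2⁻¹ : ℝ≥0∞) ^ k ≠ 0 := fun k => pow_ne_zero _ (by simp)
  have hpow' : ∀ k : ℕ, (2⁻¹ : ℝ≥0∞) ^ k ≠ ∞ := fun k => ENNReal.pow_ne_top (by simp)
  obtain ⟨n, D, hn, hD, hDμ, hFD⟩ := exists_block_cover hμ hp
    (measure_filterSet_eq_zero hμ (fun n => (hp n).2) hF hmeas)
    (ε := fun k => 2⁻¹ ^ k * 2⁻¹ ^ k) fun k => pos_iff_ne_zero.2 (mul_ne_zero (hpow k) (hpow k))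
  -- The even intervals, on which sections are taken.
  let A : Set ℕ := ⋃ l, Set.Ico (n (2 * l)) (n (2 * l + 1))
  have hinter : ∀ j, ∀ k, k = 2 * j + 1 ∨ k = 2 * j + 1 + 1 →
      Set.Ico (n k) (n (k + 2)) ∩ A ⊆ Set.Ico (n (2 * j + 2)) (n (2 * j + 4)) := by
    rintro j k hk i ⟨hi, hiA⟩
    obtain ⟨l, hl⟩ := Set.mem_iUnion.1 hiA
    have h₁ : k < 2 * l + 1 := hn.lt_iff_lt.1 (hi.1.trans_lt hl.2)
    have h₂ : 2 * l < k + 2 := hn.lt_iff_lt.1 (hl.1.trans_lt hi.2)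
    exact ⟨(hn.monotone (by omega)).trans hl.1, hl.2.trans_le (hn.monotone (by omega))⟩
  have hdiff : ∀ j, ∀ k, k = 2 * j + 2 ∨ k = 2 * j + 2 + 1 →
      Set.Ico (n k) (n (k + 2)) \ A ⊆ Set.Ico (n (2 * j + 3)) (n (2 * j + 5)) := by
    rintro j k hk i ⟨hi, hiA⟩
    have h : ∀ l, n (2 * l) ≤ i → n (2 * l + 1) ≤ i := fun l hl =>
      not_lt.1 fun hl' => hiA (Set.mem_iUnion.2 ⟨l, hl, hl'⟩)
    refine ⟨?_, hi.2.trans_le (hn.monotone (by omega))⟩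
    rcases hk with rfl | rfl
    · exact h (j + 1) hi.1
    · exact hi.1
  let bad : ℕ → Set (ℕ → Bool) := fun k => {g | 2⁻¹ ^ k ≤ μ {y | merge A g y ∈ D k}}
  have hDmeas : ∀ k, MeasurableSet (D k) := fun k => (hD k).measurableSet (Set.finite_Ico _ _)
  have hbadμ : ∀ k, μ (bad k) ≤ 2⁻¹ ^ k := fun k => by
    have h := mul_meas_ge_le_lintegral (μ := μ) (measurable_measure_section (μ := μ) A (hDmeas k))
      (2⁻¹ ^ k)
    rw [lintegral_measure_section hμ A (hDmeas k)] at h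
    exact (ENNReal.mul_le_mul_iff_right (hpow k) (hpow' k)).1 (h.trans (hDμ k))
  have hbad : ∀ k, DeterminedOn (bad k) (Set.Ico (n k) (n (k + 2)) ∩ A) := fun k g g' h hg => by
    have : {y | merge A g y ∈ D k} = {y | merge A g' y ∈ D k} :=
      Set.ext fun y => (hD k).left_merge h y
    simpa only [bad, Set.mem_ofPred_eq, this] using hg
  obtain ⟨f, hf, hfin⟩ := exists_block_index (m := fun j => n (2 * j + 2))
    fun _ _ h => hn (by omega)
  have hbadf : ∀ j, DeterminedOn (bad (2 * j + 1) ∪ bad (2 * j + 1 + 1)) (f ⁻¹' {j}) := fun j =>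
    ((hbad _).mono ((hinter j _ (.inl rfl)).trans (hf j))).union
      ((hbad _).mono ((hinter j _ (.inr rfl)).trans (hf j)))
  by_cases hcase : ∀ x ∈ filterSet F,
      ∃ᶠ j in atTop, x ∈ upperInterior (bad (2 * j + 1) ∪ bad (2 * j + 1 + 1))
  · exact exists_extension_of_blocks hF hfin (fun j => (hbadf j).upperInterior)
      (fun j => isUpperSet_upperInterior _)
      (measure_frequently_upperInterior_union_eq_zero hbadμ 0) hcase
  push Not at hcase
  obtain ⟨x₀, hx₀, hx₀bad⟩ := hcase
  obtain ⟨g, hxg, hg⟩ := exists_le_eventually_notMem hbadf hx₀bad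
  have hg' : ∀ᶠ k in atTop, g ∉ bad k := eventually_of_eventually_blocks 1 <| hg.mono fun j hj =>
    not_or.1 hj
  let Q : ℕ → Set (ℕ → Bool) := fun k => {y | g ∉ bad k ∧ merge A g y ∈ D k}
  have hQμ : ∀ k, μ (Q k) ≤ 2⁻¹ ^ k := fun k => by
    by_cases h : g ∈ bad k
    · simp [Q, h]
    · exact (measure_mono fun y hy => hy.2).trans (not_le.1 h).le
  have hQ : ∀ k, DeterminedOn (Q k) (Set.Ico (n k) (n (k + 2)) \ A) := fun k y y' h hy =>
    ⟨hy.1, (hD k).right_merge g h hy.2⟩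
  obtain ⟨f', hf', hfin'⟩ := exists_block_index (m := fun j => n (2 * j + 3))
    fun _ _ h => hn (by omega)
  have hQf : ∀ j, DeterminedOn (Q (2 * j + 2) ∪ Q (2 * j + 2 + 1)) (f' ⁻¹' {j}) := fun j =>
    ((hQ _).mono ((hdiff j _ (.inl rfl)).trans (hf' j))).union
      ((hQ _).mono ((hdiff j _ (.inr rfl)).trans (hf' j)))
  refine exists_extension_of_blocks hF hfin' (fun j => (hQf j).upperInterior)
    (fun j => isUpperSet_upperInterior _)
    (measure_frequently_upperInterior_union_eq_zero hQμ 1) fun x hx => ?_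
  by_contra hxQ
  obtain ⟨y, hxy, hy⟩ := exists_le_eventually_notMem hQf (Filter.not_frequently.1 hxQ)
  have hy' : ∀ᶠ k in atTop, y ∉ Q k := eventually_of_eventually_blocks 2 <| hy.mono fun j hj =>
    not_or.1 hj
  have hmem : merge A g y ∈ filterSet F := by
    filter_upwards [mem_filterSet_mono hx₀ hxg, mem_filterSet_mono hx hxy] with i hi hi'
    by_cases hA : i ∈ A
    · simpa [merge_of_mem hA] using hi
    · simpa [merge_of_notMem hA] using hi'
  obtain ⟨k, hk, hgk, hyk⟩ := ((hFD _ hmem).and_eventually (hg'.and hy')).exists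
  exact hyk ⟨hgk, hk⟩
end
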